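/- Let (G, H, T) be a loop folder such that T is invariant under conjugation by H (i.e., h⁻¹th ∈ T for all t ∈ T and h ∈ H). Suppose t ∈ T is such that the right coset Ht is also a left coset of H in G, i.e., there exists g ∈ G with Ht = gH as subsets of G (this holds in particular if t normalizes H). Then t commutes with every element of H. -/

import Mathlib

open Pointwise

/-- A loop folder `(G, H, T)`: `T` contains `1` and is a transversal for the right cosets
of every conjugate `H^g = g⁻¹Hg` of `H` in `G` (note `H^g x = H^g t ↔ g*(x*t⁻¹)*g⁻¹ ∈ H`). -/
def IsLoopFolder {G : Type*} [Group G] (H : Subgroup G) (T : Set G) : Prop :=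
  (1 : G) ∈ T ∧ ∀ g x : G, ∃! t, t ∈ T ∧ g * (x * t⁻¹) * g⁻¹ ∈ H

/-- The loop folder is right conjugacy closed: `T` is invariant under conjugation by `G`. -/
def IsRCC {G : Type*} [Group G] (T : Set G) : Prop :=
  ∀ t ∈ T, ∀ g : G, g⁻¹ * t * g ∈ T

/-- The loop folder is faithful: the core `⋂_{g ∈ G} g⁻¹Hg` of `H` in `G` is trivial. -/
def IsFaithfulFolder {G : Type*} [Group G] (H : Subgroup G) : Prop :=
  ∀ x : G, (∀ g : G, g * x * g⁻¹ ∈ H) → x = 1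

/-! If `Ht` is a left coset of `H`, it must be `tH`, so `t` normalizes `H`. Hence, for `h ∈ H`,
`h⁻¹th = h⁻¹(tht⁻¹)t` lies in `Ht`. It also lies in `T`, and `T` meets `Ht` only in `t`, so
`h⁻¹th = t`. -/

section

variable {G : Type*} [Group G] {H : Subgroup G} {T : Set G} {g h t : G}

theorem mem_normalizer_of_rightCoset_eq_leftCoset
    (hcoset : MulOpposite.op t • (H : Set G) = g • (H : Set G)) :
    t ∈ Subgroup.normalizer (H : Set G) := by
  have ht : t ∈ g • (H : Set G) := hcoset ▸ mem_own_rightCoset H.toSubmonoid t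
  have hleft : t • (H : Set G) = g • (H : Set G) :=
    ((leftCoset_eq_iff H).mpr ((mem_leftCoset_iff g).mp ht)).symm
  refine Subgroup.mem_normalizer_iff.mpr fun k ↦ ?_
  calc k ∈ H ↔ t * k ∈ t • (H : Set G) := Set.smul_mem_smul_set_iff.symm
    _ ↔ t * k ∈ MulOpposite.op t • (H : Set G) := by rw [hleft, hcoset]
    _ ↔ t * k * t⁻¹ ∈ H := mem_rightCoset_iff t

theorem rightRel_inv_mul_mul_of_mem_normalizer
    (ht : t ∈ Subgroup.normalizer (H : Set G)) (hh : h ∈ H) :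
    QuotientGroup.rightRel H t (h⁻¹ * t * h) := by
  have htht : t * h * t⁻¹ ∈ H := (Subgroup.mem_normalizer_iff.mp ht h).mp hh
  rw [QuotientGroup.rightRel_apply]
  simpa only [mul_assoc] using H.mul_mem (H.inv_mem hh) htht

theorem commute_of_injOn_rightRel_of_mem_normalizer
    (hT : T.InjOn (Quotient.mk (QuotientGroup.rightRel H)))
    (htH : t ∈ Subgroup.normalizer (H : Set G)) (ht : t ∈ T) (hh : h ∈ H)
    (hconj : h⁻¹ * t * h ∈ T) : Commute t h := by
  have hfix : t = h⁻¹ * t * h :=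
    hT ht hconj (Quotient.sound (rightRel_inv_mul_mul_of_mem_normalizer htH hh))
  rwa [mul_assoc, eq_inv_mul_iff_mul_eq, eq_comm] at hfix

theorem IsLoopFolder.isComplement (hLF : IsLoopFolder H T) :
    Subgroup.IsComplement (H : Set G) T := by
  refine Subgroup.isComplement_iff_existsUnique_mul_inv_mem.mpr fun x ↦ ?_
  obtain ⟨t, ⟨htT, htx⟩, huniq⟩ := hLF.2 1 x
  simp only [one_mul, inv_one, mul_one] at htx huniq
  exact ⟨⟨t, htT⟩, htx, fun s hs ↦ Subtype.ext (huniq s ⟨s.2, hs⟩)⟩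

theorem IsLoopFolder.injOn_rightRel (hLF : IsLoopFolder H T) :
    T.InjOn (Quotient.mk (QuotientGroup.rightRel H)) :=
  Set.injOn_iff_injective.mpr
    (Subgroup.isComplement_subgroup_left_iff_bijective.mp hLF.isComplement).injective

theorem stmt_7_general (hT : T.InjOn (Quotient.mk (QuotientGroup.rightRel H)))
    (hconj : ∀ h ∈ H, h⁻¹ * t * h ∈ T)
    (hcoset : (H : Set G) * {t} = {g} * (H : Set G)) :
    ∀ h ∈ H, Commute t h := by
  rw [Set.mul_singleton, Set.singleton_mul] at hcoset
  have htH : t ∈ Subgroup.normalizer (H : Set G) :=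
    mem_normalizer_of_rightCoset_eq_leftCoset hcoset
  have ht : t ∈ T := by simpa using hconj 1 H.one_mem
  exact fun h hh ↦ commute_of_injOn_rightRel_of_mem_normalizer hT htH ht hh (hconj h hh)

end

/-- If `T` is invariant under conjugation by `H` and `t ∈ T` is such that the right coset
`Ht` is also a left coset `gH`, then `t` commutes with every element of `H`. -/
theorem stmt_7 {G : Type*} [Group G] [Finite G] (H : Subgroup G) (T : Set G)
    (hLF : IsLoopFolder H T)
    (hHinv : ∀ t ∈ T, ∀ h ∈ H, h⁻¹ * t * h ∈ T)
    (t : G) (ht : t ∈ T) (g : G)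
    (hcoset : (H : Set G) * {t} = {g} * (H : Set G)) :
    ∀ h ∈ H, t * h = h * t :=
  stmt_7_general hLF.injOn_rightRel (hHinv t ht) hcoset
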